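/- Let k be an algebraically closed field of characteristic 2, W the ring of 2-typical Witt vectors over k, F the fraction field of W, and Ω an algebraic closure of F. For each ℓ ≥ 2 let ζ_{2^ℓ} ∈ Ω be a primitive 2^ℓ-th root of unity. Define q₂(t) = t, q_{ℓ+1}(t) = q_ℓ(t)² − 2, and p_{d+1}(t) = ∏_{ℓ=2}^{d} q_ℓ(t) for d ≥ 2. Then for any sequence (r_ℓ)_{ℓ=2}^{d} of odd integers, the W-algebra homomorphism W[t] → ∏_{ℓ=2}^{d} Ω sending t to the tuple (ζ_{2^ℓ}^{r_ℓ} + ζ_{2^ℓ}^{-r_ℓ})_{ℓ=2}^{d} has kernel equal to the principal ideal generated by p_{d+1}(t); consequently W[t]/(p_{d+1}(t)) is isomorphic as a W-algebra to the W-subalgebra of ∏_{ℓ=2}^{d} Ω generated by the element (ζ_{2^ℓ}^{r_ℓ} + ζ_{2^ℓ}^{-r_ℓ})_{ℓ=2}^{d}. -/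

import Mathlib

/-!
For `z ≠ 0`, `q_{n+2}(z + z⁻¹) = z^(2^n) + z^(-2^n)`, so if `z` is a primitive `2^(n+2)`-th root of
unity then `z^(2^n)` is a primitive fourth root of unity and `z + z⁻¹` is a root of `q_{n+2}`
(`aeval_qPoly_eq_zero`).

Moreover `q_{n+2}` is monic of degree `2^n`, congruent to `X^(2^n)` modulo `2`, and for `n ≥ 1` its
constant term is `±2`. Hence it is Eisenstein for `n ≥ 1`, while `q_2 = X`, so it is irreducible
over every domain in which `2` is prime (`irreducible_qPoly_map`). Let `R` be such a domain with
unique factorization. As `R` is integrally closed, `q_ℓ` is an associate of the minimal polynomial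
of each of its roots in a field containing `R`, and divides every polynomial over `R` vanishing
there. The `q_ℓ` have distinct degrees, so they are pairwise relatively prime, and a polynomial
vanishing at a root of each of them is divisible by their product (`ker_aeval_eq_span`). This
applies to the Witt vectors `W`, a discrete valuation ring with uniformizer `2`.
-/

/-- The polynomials `q_ℓ` defined by `q_2(t) = t` and `q_{ℓ+1}(t) = q_ℓ(t)^2 - 2`. -/
noncomputable def qPoly : ℕ → Polynomial ℤ
  | 0 => Polynomial.X
  | 1 => Polynomial.X
  | 2 => Polynomial.X
  | n + 3 => (qPoly (n + 2)) ^ 2 - 2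

/-- The polynomial `p_{d+1}(t) = ∏_{ℓ=2}^{d} q_ℓ(t)`. -/
noncomputable def pPoly (d : ℕ) : Polynomial ℤ := ∏ ℓ ∈ Finset.Icc 2 d, qPoly ℓ

open Polynomial

theorem qPoly_monic_natDegree (n : ℕ) :
    (qPoly (n + 2)).Monic ∧ (qPoly (n + 2)).natDegree = 2 ^ n := by
  induction n with
  | zero => exact ⟨monic_X, by simp [qPoly]⟩
  | succ n ih =>
    obtain ⟨hm, hd⟩ := ih
    have hd2 : (qPoly (n + 2) ^ 2).natDegree = 2 ^ (n + 1) := by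
      rw [hm.natDegree_pow, hd, pow_succ, mul_comm]
    have h2 : (2 : ℤ[X]) = C 2 := rfl
    have hq : qPoly (n + 1 + 2) = qPoly (n + 2) ^ 2 - C 2 := by rw [← h2]; rfl
    rw [hq]
    refine ⟨?_, by rw [natDegree_sub_C, hd2]⟩
    refine (hm.pow 2).sub_of_left (lt_of_le_of_lt degree_C_le ?_)
    rw [← natDegree_pos_iff_degree_pos, hd2]
    positivity

theorem qPoly_congr_X_pow (n : ℕ) : (2 : ℤ[X]) ∣ qPoly (n + 2) - X ^ 2 ^ n := by
  induction n with
  | zero => simp [qPoly]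
  | succ n ih =>
    obtain ⟨h, hh⟩ := ih
    refine ⟨h * (qPoly (n + 2) + X ^ 2 ^ n) - 1, ?_⟩
    have hq : qPoly (n + 1 + 2) = qPoly (n + 2) ^ 2 - 2 := rfl
    rw [hq, pow_succ 2 n, pow_mul]
    linear_combination (qPoly (n + 2) + X ^ 2 ^ n) * hh

theorem qPoly_coeff_zero (n : ℕ) :
    (qPoly (n + 3)).coeff 0 = 2 ∨ (qPoly (n + 3)).coeff 0 = -2 := by
  have hq (m : ℕ) : (qPoly (m + 3)).coeff 0 = (qPoly (m + 2)).coeff 0 ^ 2 - 2 := by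
    simp [qPoly, coeff_zero_eq_eval_zero]
  induction n with
  | zero => right; rw [hq]; simp [qPoly]
  | succ n ih =>
    left
    rw [hq]
    rcases ih with h | h <;> rw [show n + 1 + 2 = n + 3 from rfl, h] <;> norm_num

/-- For `ℓ ≥ 3` this is Eisenstein's criterion at the prime `2`. -/
theorem irreducible_qPoly_map {R : Type*} [CommRing R] [IsDomain R] (h2 : Prime (2 : R)) (n : ℕ) :
    Irreducible ((qPoly (n + 2)).map (Int.castRingHom R)) := by
  rcases n with _ | n
  · simpa [qPoly] using irreducible_X
  obtain ⟨hm, hd⟩ := qPoly_monic_natDegree (n + 1)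
  have hm' := hm.map (Int.castRingHom R)
  have hd' : ((qPoly (n + 1 + 2)).map (Int.castRingHom R)).natDegree = 2 ^ (n + 1) := by
    rw [hm.natDegree_map, hd]
  have hP : (Ideal.span {(2 : R)}).IsPrime := (Ideal.span_singleton_prime h2.ne_zero).2 h2
  refine irreducible_of_eisenstein_criterion hP ?_ ?_ ?_ ?_ hm'.isPrimitive
  · rw [hm'.leadingCoeff]
    exact fun h => hP.ne_top ((Ideal.eq_top_iff_one _).2 h)
  · intro i hi
    rw [degree_eq_natDegree hm'.ne_zero, hd', Nat.cast_lt] at hi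
    obtain ⟨h, hh⟩ := qPoly_congr_X_pow (n + 1)
    have hc : (qPoly (n + 1 + 2)).coeff i = 2 * h.coeff i := by
      have := congrArg (coeff · i) hh
      have h2C : (2 : ℤ[X]) = C 2 := rfl
      simpa only [coeff_sub, coeff_X_pow, if_neg hi.ne, sub_zero, h2C, coeff_C_mul] using this
    rw [coeff_map, hc, Ideal.mem_span_singleton]
    exact ⟨(h.coeff i : R), by simp⟩
  · rw [← natDegree_pos_iff_degree_pos, hd']
    positivity
  · have h4 : ¬ (2 : R) ^ 2 ∣ 2 := by
      rintro ⟨c, hc⟩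
      refine h2.not_isUnit (IsUnit.of_mul_eq_one c (mul_left_cancel₀ h2.ne_zero ?_))
      rw [mul_one, ← mul_assoc, ← sq, ← hc]
    rw [Ideal.span_singleton_pow, Ideal.mem_span_singleton, coeff_map]
    rcases qPoly_coeff_zero n with h | h <;> rw [show n + 1 + 2 = n + 3 from rfl, h] <;>
      simpa using h4

theorem aeval_qPoly_add_inv {K : Type*} [Field K] {z : K} (hz : z ≠ 0) (n : ℕ) :
    aeval (z + z⁻¹) (qPoly (n + 2)) = z ^ 2 ^ n + (z ^ 2 ^ n)⁻¹ := by
  induction n with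
  | zero => simp [qPoly]
  | succ n ih =>
    have hq : qPoly (n + 1 + 2) = qPoly (n + 2) ^ 2 - 2 := rfl
    have hz' : z ^ 2 ^ n ≠ 0 := pow_ne_zero _ hz
    rw [hq, map_sub, map_pow, ih, pow_succ 2 n, pow_mul, map_ofNat]
    field_simp
    ring

theorem aeval_qPoly_eq_zero {K : Type*} [Field K] {z : K} {n : ℕ}
    (hz : IsPrimitiveRoot z (2 ^ (n + 2))) : aeval (z + z⁻¹) (qPoly (n + 2)) = 0 := by
  rw [aeval_qPoly_add_inv (hz.ne_zero (by positivity))]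
  have h1 : IsPrimitiveRoot (z ^ 2 ^ (n + 1)) 2 := hz.pow (by positivity) (by ring)
  have h2 := h1.eq_neg_one_of_two_right
  rw [pow_succ 2 n, pow_mul] at h2
  have h0 : z ^ 2 ^ n ≠ 0 := pow_ne_zero _ (hz.ne_zero (by positivity))
  field_simp
  rw [h2]
  ring

/-- The kernel of evaluation at a tuple of roots of the `q_ℓ`, over any unique factorization domain
in which `2` is prime. -/
theorem ker_aeval_eq_span {R K : Type*} [CommRing R] [IsDomain R] [UniqueFactorizationMonoid R]
    [Field K] [Algebra R K] [Module.IsTorsionFree R K] (h2 : Prime (2 : R)) (d : ℕ)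
    (θ : Finset.Icc 2 d → K) (hθ : ∀ ℓ : Finset.Icc 2 d, aeval (θ ℓ) (qPoly ℓ) = 0) :
    RingHom.ker (aeval θ : R[X] →ₐ[R] (Finset.Icc 2 d → K))
      = Ideal.span {(pPoly d).map (Int.castRingHom R)} := by
  have hroot (ℓ : Finset.Icc 2 d) : aeval (θ ℓ) ((qPoly ℓ).map (Int.castRingHom R)) = 0 := by
    rw [← hθ ℓ]
    exact aeval_map_algebraMap R (θ ℓ) (qPoly ℓ)
  have hmonic (ℓ : ℕ) (hℓ : ℓ ∈ Finset.Icc 2 d) : ((qPoly ℓ).map (Int.castRingHom R)).Monic := by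
    obtain ⟨n, rfl⟩ := Nat.exists_eq_add_of_le' (Finset.mem_Icc.1 hℓ).1
    exact (qPoly_monic_natDegree n).1.map _
  have hirr (ℓ : ℕ) (hℓ : ℓ ∈ Finset.Icc 2 d) :
      Irreducible ((qPoly ℓ).map (Int.castRingHom R)) := by
    obtain ⟨n, rfl⟩ := Nat.exists_eq_add_of_le' (Finset.mem_Icc.1 hℓ).1
    exact irreducible_qPoly_map h2 n
  have hp : (pPoly d).map (Int.castRingHom R)
      = ∏ ℓ ∈ Finset.Icc 2 d, (qPoly ℓ).map (Int.castRingHom R) := by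
    rw [pPoly, Polynomial.map_prod]
  ext f
  rw [RingHom.mem_ker, Ideal.mem_span_singleton, hp]
  have happ (g : R[X]) (ℓ : Finset.Icc 2 d) : aeval θ g ℓ = aeval (θ ℓ) g :=
    (aeval_algHom_apply (Pi.evalAlgHom R (fun _ : Finset.Icc 2 d => K) ℓ) θ g).symm
  constructor
  · intro hf
    refine Finset.prod_dvd_of_isRelPrime ?_ ?_
    · intro i hi j hj hij
      refine (hirr i hi).isRelPrime_iff_not_dvd.2 fun hdvd => hij ?_
      have heq := eq_of_monic_of_associated (hmonic i hi) (hmonic j hj)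
        ((hirr i hi).associated_of_dvd (hirr j hj) hdvd)
      obtain ⟨a, rfl⟩ := Nat.exists_eq_add_of_le' (Finset.mem_Icc.1 hi).1
      obtain ⟨b, rfl⟩ := Nat.exists_eq_add_of_le' (Finset.mem_Icc.1 hj).1
      have hdeg := congrArg natDegree heq
      rw [(qPoly_monic_natDegree a).1.natDegree_map, (qPoly_monic_natDegree b).1.natDegree_map,
        (qPoly_monic_natDegree a).2, (qPoly_monic_natDegree b).2] at hdeg
      rw [Nat.pow_right_injective le_rfl hdeg]
    · intro ℓ hℓ
      have hint : IsIntegral R (θ ⟨ℓ, hℓ⟩) := ⟨_, hmonic ℓ hℓ, hroot ⟨ℓ, hℓ⟩⟩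
      have hmin := minpoly.isIntegrallyClosed_dvd hint (hroot ⟨ℓ, hℓ⟩)
      have hassoc := (minpoly.irreducible hint).associated_of_dvd (hirr ℓ hℓ) hmin
      refine hassoc.symm.dvd.trans (minpoly.isIntegrallyClosed_dvd hint ?_)
      rw [← happ, hf, Pi.zero_apply]
  · rintro ⟨g, rfl⟩
    ext ℓ
    rw [happ, map_mul, map_prod, Finset.prod_eq_zero ℓ.2 (hroot ℓ), zero_mul, Pi.zero_apply]

/-
STATEMENT 14:
Let k be an algebraically closed field of characteristic 2, W the 2-typical Witt
vectors over k, F = Frac(W), Ω an algebraic closure of F, ζ_{2^ℓ} ∈ Ω primitive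
2^ℓ-th roots of unity. Then for any sequence (r_ℓ) of odd integers, the W-algebra
homomorphism W[t] → ∏_{ℓ=2}^{d} Ω sending t to (ζ_{2^ℓ}^{r_ℓ} + ζ_{2^ℓ}^{-r_ℓ})_ℓ
has kernel the principal ideal (p_{d+1}(t)); consequently W[t]/(p_{d+1}(t)) is
isomorphic as a W-algebra to the W-subalgebra of ∏_{ℓ=2}^{d} Ω generated by
(ζ_{2^ℓ}^{r_ℓ} + ζ_{2^ℓ}^{-r_ℓ})_ℓ.
-/
theorem stmt14 (k : Type) [Field k] [IsAlgClosed k] [CharP k 2]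
    (d : ℕ) (hd : 2 ≤ d)
    (ζ : ℕ → AlgebraicClosure (FractionRing (WittVector 2 k)))
    (hζ : ∀ ℓ, 2 ≤ ℓ → ℓ ≤ d → IsPrimitiveRoot (ζ ℓ) (2 ^ ℓ))
    (r : ℕ → ℤ) (hr : ∀ ℓ, Odd (r ℓ)) :
    letI : Algebra (WittVector 2 k) (AlgebraicClosure (FractionRing (WittVector 2 k))) :=
      ((algebraMap (FractionRing (WittVector 2 k))
          (AlgebraicClosure (FractionRing (WittVector 2 k)))).comp
        (algebraMap (WittVector 2 k) (FractionRing (WittVector 2 k)))).toAlgebra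
    RingHom.ker
        (Polynomial.aeval
          (fun ℓ : Finset.Icc 2 d => ζ (ℓ : ℕ) ^ (r (ℓ : ℕ)) + ζ (ℓ : ℕ) ^ (-(r (ℓ : ℕ)))) :
          Polynomial (WittVector 2 k) →ₐ[WittVector 2 k]
            ((_ : Finset.Icc 2 d) → AlgebraicClosure (FractionRing (WittVector 2 k))))
      = Ideal.span {(pPoly d).map (Int.castRingHom (WittVector 2 k))}
    ∧ Nonempty
        ((Polynomial (WittVector 2 k) ⧸
            Ideal.span {(pPoly d).map (Int.castRingHom (WittVector 2 k))})
          ≃ₐ[WittVector 2 k]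
         Algebra.adjoin (WittVector 2 k)
           {fun ℓ : Finset.Icc 2 d => ζ (ℓ : ℕ) ^ (r (ℓ : ℕ)) + ζ (ℓ : ℕ) ^ (-(r (ℓ : ℕ)))}) := by
  let _ : Algebra (WittVector 2 k) (AlgebraicClosure (FractionRing (WittVector 2 k))) :=
    ((algebraMap (FractionRing (WittVector 2 k))
        (AlgebraicClosure (FractionRing (WittVector 2 k)))).comp
      (algebraMap (WittVector 2 k) (FractionRing (WittVector 2 k)))).toAlgebra
  have hinj : Function.Injective
      (algebraMap (WittVector 2 k) (AlgebraicClosure (FractionRing (WittVector 2 k)))) :=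
    (algebraMap (FractionRing (WittVector 2 k)) _).injective.comp
      (IsFractionRing.injective (WittVector 2 k) (FractionRing (WittVector 2 k)))
  have : Module.IsTorsionFree (WittVector 2 k)
      (AlgebraicClosure (FractionRing (WittVector 2 k))) :=
    Module.isTorsionFree_iff_algebraMap_injective.2 hinj
  have : IsDiscreteValuationRing (WittVector 2 k) := WittVector.isDiscreteValuationRing
  have h2 : Prime (2 : WittVector 2 k) := by
    simpa using (WittVector.irreducible 2 (k := k)).prime
  have hker := ker_aeval_eq_span h2 d
    (fun ℓ : Finset.Icc 2 d => ζ (ℓ : ℕ) ^ (r (ℓ : ℕ)) + ζ (ℓ : ℕ) ^ (-(r (ℓ : ℕ)))) (by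
      rintro ⟨ℓ, hℓ⟩
      obtain ⟨h2ℓ, hℓd⟩ := Finset.mem_Icc.1 hℓ
      -- An odd power of a primitive `2^ℓ`-th root of unity is again one.
      have hprim := (hζ ℓ h2ℓ hℓd).zpow_of_gcd_eq_one (r ℓ) (by
        rw [← Int.isCoprime_iff_gcd_eq_one]
        push_cast
        exact (Int.isCoprime_two_right.2 (hr ℓ)).pow_right)
      obtain ⟨n, rfl⟩ := Nat.exists_eq_add_of_le' h2ℓ
      simpa only [zpow_neg] using aeval_qPoly_eq_zero hprim)
  refine ⟨hker, ⟨?_⟩⟩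
  exact (Ideal.quotientEquivAlgOfEq _ hker.symm).trans
    ((Ideal.quotientKerEquivRange _).trans
      (Subalgebra.equivOfEq _ _ (Algebra.adjoin_singleton_eq_range_aeval _ _).symm))
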